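/- Suppose ψ̃ has M vanishing moments. Then for every σ > 0 and every θ ∈ ℝ, ∫_ℝ (x^M / M!) ψ̃(σx − θ) dx = (−1)^M σ^{−(M+1)} Ψ_{M+1}(L). -/

import Mathlib

open MeasureTheory

/-- Iterated antiderivatives of a wavelet: `Psi L ψ 0 = ψ` and
`Psi L ψ (m+1) x = ∫_{-L}^x Psi L ψ m t dt`. -/
noncomputable def Psi (L : ℝ) (ψ : ℝ → ℝ) : ℕ → ℝ → ℝ
  | 0 => ψ
  | m + 1 => fun x => ∫ t in (-L)..x, Psi L ψ m t

/-!
Vanishing moments annihilate every monomial below degree `M`, so integrating `ψ` against a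
polynomial of degree at most `M` only sees the coefficient of `X ^ M`. After substituting
`y = σ x - θ`, the left-hand side is therefore a multiple of `∫ y ^ M ψ(y) dy`, and so is
`∫ (L - y) ^ M ψ(y) dy`, which Cauchy's formula for repeated integration identifies with
`M! Ψ_{M+1}(L)`.
-/

open Function Polynomial Set
open scoped Nat

section RepeatedIntegration

lemma integral_mul_eq_sub_integral_deriv_mul_primitive {f g : ℝ → ℝ} {a b : ℝ}
    (hg : AbsolutelyContinuousOnInterval g a b) (hf : IntervalIntegrable f volume a b) :
    ∫ t in a..b, g t * f t =
      g b * (∫ t in a..b, f t) - ∫ t in a..b, deriv g t * ∫ s in a..t, f s := by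
  have hprimitive := hf.absolutelyContinuousOnInterval_intervalIntegral (c := a) left_mem_uIcc
  have hderiv : ∫ t in a..b, g t * f t =
      ∫ t in a..b, g t * deriv (fun u => ∫ s in a..u, f s) t := by
    apply intervalIntegral.integral_congr_ae
    filter_upwards [hf.ae_hasDerivAt_integral] with t ht hmem
    rw [(ht (uIoc_subset_uIcc hmem) a left_mem_uIcc).deriv]
  simp [hderiv, hg.integral_mul_deriv_eq_deriv_mul hprimitive]

lemma integral_sub_pow_succ_mul {f : ℝ → ℝ} {a b : ℝ} (hf : IntervalIntegrable f volume a b)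
    (m : ℕ) :
    ∫ t in a..b, (b - t) ^ (m + 1) * f t =
      (m + 1) * ∫ t in a..b, (b - t) ^ m * ∫ s in a..t, f s := by
  have hkernel : AbsolutelyContinuousOnInterval (fun t => (b - t) ^ (m + 1)) a b :=
    ContDiffOn.absolutelyContinuousOnInterval (by fun_prop)
  have hderiv (t : ℝ) : deriv (fun t => (b - t) ^ (m + 1)) t = -((m + 1) * (b - t) ^ m) := by
    simpa using (((hasDerivAt_id' t).const_sub b).fun_pow (m + 1)).deriv
  rw [integral_mul_eq_sub_integral_deriv_mul_primitive hkernel hf]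
  simp [hderiv, mul_assoc]

lemma intervalIntegrable_Psi {L x : ℝ} {ψ : ℝ → ℝ} (hψ : IntervalIntegrable ψ volume (-L) x) :
    ∀ m, IntervalIntegrable (Psi L ψ m) volume (-L) x
  | 0 => hψ
  | m + 1 => (intervalIntegral.continuousOn_primitive_interval'
      (intervalIntegrable_Psi hψ m) left_mem_uIcc).intervalIntegrable

lemma integral_sub_pow_mul_Psi {L x : ℝ} {ψ : ℝ → ℝ} (hψ : IntervalIntegrable ψ volume (-L) x)
    (m j : ℕ) :
    ∫ t in (-L)..x, (x - t) ^ m * Psi L ψ j t = m ! * Psi L ψ (j + m + 1) x := by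
  induction m generalizing j with
  | zero => simp [Psi]
  | succ m ih =>
    calc ∫ t in (-L)..x, (x - t) ^ (m + 1) * Psi L ψ j t
        = (m + 1) * ∫ t in (-L)..x, (x - t) ^ m * Psi L ψ (j + 1) t :=
          integral_sub_pow_succ_mul (intervalIntegrable_Psi hψ j) m
      _ = (m + 1) * (m ! * Psi L ψ (j + 1 + m + 1) x) := by rw [ih]
      _ = (m + 1)! * Psi L ψ (j + (m + 1) + 1) x := by
          rw [Nat.factorial_succ, add_right_comm j 1 m, add_assoc j m 1]
          push_cast
          ring

end RepeatedIntegration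

section VanishingMoments

/-- `ψ` has `M` vanishing moments with respect to `μ`: its moments of order `0, …, M - 1` are zero.
Integrability is not part of the notion, so it has to be assumed alongside for the moments to be
meaningful. -/
def HasVanishingMoments (M : ℕ) (ψ : ℝ → ℝ) (μ : Measure ℝ := by volume_tac) : Prop :=
  ∀ k < M, ∫ x, x ^ k * ψ x ∂μ = 0

variable {M : ℕ} {ψ : ℝ → ℝ} {μ : Measure ℝ}

lemma HasVanishingMoments.integral_eval_mul (hmom : HasVanishingMoments M ψ μ)
    (hint : ∀ k ≤ M, Integrable (fun x => x ^ k * ψ x) μ) {p : ℝ[X]} (hp : p.natDegree ≤ M) :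
    ∫ x, p.eval x * ψ x ∂μ = p.coeff M * ∫ x, x ^ M * ψ x ∂μ := by
  calc ∫ x, p.eval x * ψ x ∂μ
      = ∫ x, ∑ k ∈ Finset.range (M + 1), p.coeff k * (x ^ k * ψ x) ∂μ := by
        simp only [eval_eq_sum_range' (Nat.lt_succ_of_le hp), Finset.sum_mul, mul_assoc]
    _ = ∑ k ∈ Finset.range (M + 1), p.coeff k * ∫ x, x ^ k * ψ x ∂μ := by
        rw [integral_finsetSum _ fun k hk =>
          (hint k (Finset.mem_range_succ_iff.mp hk)).const_mul _]
        simp only [integral_const_mul]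
    _ = p.coeff M * ∫ x, x ^ M * ψ x ∂μ := by
        rw [Finset.sum_range_succ, Finset.sum_eq_zero, zero_add]
        intro k hk
        rw [hmom k (Finset.mem_range.mp hk), mul_zero]

lemma HasVanishingMoments.integral_linear_pow_mul (hmom : HasVanishingMoments M ψ μ)
    (hint : ∀ k ≤ M, Integrable (fun x => x ^ k * ψ x) μ) (a b : ℝ) :
    ∫ x, (a * x + b) ^ M * ψ x ∂μ = a ^ M * ∫ x, x ^ M * ψ x ∂μ := by
  have hdegree : ((C a * X + C b) ^ M).natDegree ≤ M := by
    simpa using natDegree_pow_le_of_le M (natDegree_linear_le (a := a) (b := b))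
  have hcoeff : ((C a * X + C b) ^ M).coeff M = a ^ M := by
    simpa using coeff_pow_of_natDegree_le (m := M) (natDegree_linear_le (a := a) (b := b))
  simpa [hcoeff] using hmom.integral_eval_mul hint hdegree

end VanishingMoments

section CompactSupport

lemma integrable_of_abs_le_of_support_subset {α : Type*} [MeasurableSpace α] {μ : Measure α}
    {f : α → ℝ} {s : Set α} {B : ℝ} (hf : AEStronglyMeasurable f μ) (hB : ∀ x, |f x| ≤ B)
    (hs : μ s ≠ ⊤) (hsupp : support f ⊆ s) : Integrable f μ :=
  (integrableOn_iff_integrable_of_support_subset hsupp).mp <|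
    Measure.integrableOn_of_bounded hs hf (Filter.Eventually.of_forall hB)

lemma integrable_mul_of_continuous_of_support_subset {X : Type*} [TopologicalSpace X] [T2Space X]
    [MeasurableSpace X] [OpensMeasurableSpace X] {f g : X → ℝ} {K : Set X} {μ : Measure X}
    (hg : Continuous g) (hf : Integrable f μ) (hK : IsCompact K) (hsupp : support f ⊆ K) :
    Integrable (fun x => g x * f x) μ :=
  (integrableOn_iff_integrable_of_support_subset
    ((support_mul_subset_right g f).trans hsupp)).mp
    (hf.integrableOn.continuousOn_mul hg.continuousOn hK)

lemma intervalIntegral_eq_integral_of_support_subset_Icc {E : Type*} [NormedAddCommGroup E]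
    [NormedSpace ℝ E] {f : ℝ → E} {a b : ℝ} (hab : a ≤ b) (hsupp : support f ⊆ Icc a b) :
    ∫ x in a..b, f x = ∫ x, f x := by
  rw [intervalIntegral.integral_of_le hab, ← integral_Icc_eq_integral_Ioc,
    setIntegral_eq_integral_of_forall_compl_eq_zero fun x hx =>
      notMem_support.mp fun hne => hx (hsupp hne)]

end CompactSupport

lemma integral_comp_mul_sub {E : Type*} [NormedAddCommGroup E] [NormedSpace ℝ E] (g : ℝ → E)
    (σ θ : ℝ) : ∫ x, g (σ * x - θ) = |σ⁻¹| • ∫ y, g y := by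
  rw [Measure.integral_comp_mul_left (fun y => g (y - θ)) σ, integral_sub_right_eq_self]

section Wavelet

variable {M : ℕ} {L : ℝ} {ψ : ℝ → ℝ}

lemma integral_pow_mul_eq_Psi (hL : 0 ≤ L) (hψ : Integrable ψ) (hsupp : support ψ ⊆ Icc (-L) L)
    (hmom : HasVanishingMoments M ψ) :
    ∫ x, x ^ M * ψ x = (-1) ^ M * (M ! * Psi L ψ (M + 1) L) := by
  have hmoment (k : ℕ) : Integrable fun x => x ^ k * ψ x :=
    integrable_mul_of_continuous_of_support_subset (continuous_pow k) hψ isCompact_Icc hsupp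
  have hcauchy : ∫ x, (L - x) ^ M * ψ x = M ! * Psi L ψ (M + 1) L := by
    rw [← intervalIntegral_eq_integral_of_support_subset_Icc (neg_le_self hL)
      ((support_mul_subset_right _ ψ).trans hsupp)]
    simpa [Psi] using integral_sub_pow_mul_Psi hψ.intervalIntegrable M 0
  have hreflect : ∫ x, (L - x) ^ M * ψ x = (-1) ^ M * ∫ x, x ^ M * ψ x := by
    simpa [neg_add_eq_sub] using hmom.integral_linear_pow_mul (fun k _ => hmoment k) (-1) L
  rw [← hcauchy, hreflect, ← mul_assoc, ← mul_pow]
  simp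

theorem rect_wavelet_monomial_coef_general (hL : 0 ≤ L) (hψ : Integrable ψ)
    (hsupp : support ψ ⊆ Icc (-L) L) (hmom : HasVanishingMoments M ψ) {σ : ℝ} (hσ : σ ≠ 0)
    (θ : ℝ) :
    ∫ x, x ^ M / M ! * ψ (σ * x - θ) =
      (-1) ^ M * (|σ|⁻¹ * σ ^ (-M : ℤ)) * Psi L ψ (M + 1) L := by
  have hmoment (k : ℕ) : Integrable fun x => x ^ k * ψ x :=
    integrable_mul_of_continuous_of_support_subset (continuous_pow k) hψ isCompact_Icc hsupp
  calc ∫ x, x ^ M / M ! * ψ (σ * x - θ)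
      = ∫ x, (M ! : ℝ)⁻¹ * ((σ⁻¹ * (σ * x - θ) + σ⁻¹ * θ) ^ M * ψ (σ * x - θ)) := by
        congr! 2 with x
        have hsubst : σ⁻¹ * (σ * x - θ) + σ⁻¹ * θ = x := by
          field_simp
          ring
        rw [hsubst]
        ring
    _ = |σ|⁻¹ * ((M ! : ℝ)⁻¹ * ∫ y, (σ⁻¹ * y + σ⁻¹ * θ) ^ M * ψ y) := by
        rw [integral_comp_mul_sub
          (fun y => (M ! : ℝ)⁻¹ * ((σ⁻¹ * y + σ⁻¹ * θ) ^ M * ψ y)) σ θ,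
          integral_const_mul, abs_inv, smul_eq_mul]
    _ = |σ|⁻¹ * ((M ! : ℝ)⁻¹ * (σ⁻¹ ^ M * ((-1) ^ M * (M ! * Psi L ψ (M + 1) L)))) := by
        rw [hmom.integral_linear_pow_mul (fun k _ => hmoment k),
          integral_pow_mul_eq_Psi hL hψ hsupp hmom]
    _ = (-1) ^ M * (|σ|⁻¹ * σ ^ (-M : ℤ)) * Psi L ψ (M + 1) L := by
        have hfactorial : (M ! : ℝ) ≠ 0 := by positivity
        rw [zpow_neg, zpow_natCast, inv_pow]
        field_simp

end Wavelet

/-- If `ψ̃` has `M` vanishing moments then for every `σ > 0` and `θ ∈ ℝ`,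
`∫ (x^M / M!) ψ̃(σx − θ) dx = (−1)^M σ^{−(M+1)} Ψ_{M+1}(L)`. -/
theorem rect_wavelet_monomial_coef
    (M : ℕ) (hM : 0 < M) (L : ℝ) (hL : 0 < L)
    (ψ : ℝ → ℝ) (hmeas : Measurable ψ) (hbdd : ∃ B : ℝ, ∀ x, |ψ x| ≤ B)
    (hsupp : ∀ x : ℝ, L < |x| → ψ x = 0)
    (hmom : ∀ k : ℕ, k < M → ∫ x : ℝ, x ^ k * ψ x = 0) :
    ∀ σ : ℝ, 0 < σ → ∀ θ : ℝ,
      ∫ x : ℝ, x ^ M / (Nat.factorial M) * ψ (σ * x - θ) =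
        (-1 : ℝ) ^ M * σ ^ (-(M + 1 : ℤ)) * Psi L ψ (M + 1) L := by
  intro σ hσ θ
  obtain ⟨B, hB⟩ := hbdd
  have hsupport : support ψ ⊆ Icc (-L) L := fun x hx => abs_le.mp (not_lt.mp (mt (hsupp x) hx))
  have hψ : Integrable ψ := integrable_of_abs_le_of_support_subset
    hmeas.aestronglyMeasurable hB measure_Icc_lt_top.ne hsupport
  rw [rect_wavelet_monomial_coef_general hL.le hψ hsupport hmom hσ.ne' θ, abs_of_pos hσ,
    neg_add_rev, zpow_add₀ hσ.ne', zpow_neg_one]
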